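/- Let L be an ideal lattice and let L' ⊆ L be a subset such that inf A ∈ L' for every A ⊆ L' and sup A ∈ L' for every directed A ⊆ L'. Define π : L → L' by π(a) = inf{a' ∈ L' : a ≤ a'}, and assume π(a·π(b)) = π(ab) = π(π(a)·b) for all a, b ∈ L. Then L', with the induced partial order and the multiplication a · b = π(ab), is itself an ideal lattice; in particular L' is a complete, compactly generated lattice whose suprema are given by sup_{L'} A = inf{a' ∈ L' : a ≤ a' for all a ∈ A}, and the compact elements of L' are exactly the elements π(a) with a compact in L. -/

import Mathlib

open CompleteLattice TopologicalSpace

/-- An ideal lattice: a complete, compactly generated lattice with an associative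
multiplication distributing over finite suprema, for which `⊤` is a compact
two-sided identity and products of compact elements are compact. -/
structure IsIdealLattice (α : Type*) [CompleteLattice α] [Mul α] : Prop where
  mul_assoc : ∀ a b c : α, a * b * c = a * (b * c)
  compactlyGenerated : ∀ a : α, a = sSup {b : α | b ≤ a ∧ IsCompactElement b}
  mul_sup : ∀ a b c : α, a * (b ⊔ c) = a * b ⊔ a * c
  sup_mul : ∀ a b c : α, (a ⊔ b) * c = a * c ⊔ b * c
  top_compact : IsCompactElement (⊤ : α)
  top_mul : ∀ a : α, ⊤ * a = a
  mul_top : ∀ a : α, a * ⊤ = a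
  compact_mul : ∀ a b : α, IsCompactElement a → IsCompactElement b → IsCompactElement (a * b)

/-- A prime element of an ideal lattice: `p ≠ ⊤` and `a * b ≤ p` implies `a ≤ p` or `b ≤ p`. -/
def IsPrimeElt {α : Type*} [CompleteLattice α] [Mul α] (p : α) : Prop :=
  p ≠ ⊤ ∧ ∀ a b : α, a * b ≤ p → a ≤ p ∨ b ≤ p

/-- A semi-prime element of an ideal lattice: `b * b ≤ a` implies `b ≤ a`. -/
def IsSemiprimeElt {α : Type*} [CompleteLattice α] [Mul α] (a : α) : Prop :=
  ∀ b : α, b * b ≤ a → b ≤ a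

/-!
The map `π` is left adjoint to the inclusion `L' → L` and retracts it, and closure of `L'` under
directed suprema says that the inclusion is Scott continuous; hence `π` preserves suprema and
compactness. Conversely, a compact `c ∈ L'` is the directed supremum of the `π(b)` with `b ≤ c`
compact in `L`, so it is one of them. The identities for `π` say that it is multiplicative, and
since it is surjective, every axiom of an ideal lattice passes from `L` to `L'`.
-/

theorem supClosed_setOf_isCompactElement {α : Type*} [SemilatticeSup α] :
    SupClosed {a : α | IsCompactElement a} := by
  intro a ha b hb s v hs hdir hv hab
  obtain ⟨x, hx, hax⟩ := ha s v hs hdir hv (le_sup_left.trans hab)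
  obtain ⟨y, hy, hby⟩ := hb s v hs hdir hv (le_sup_right.trans hab)
  obtain ⟨z, hz, hxz, hyz⟩ := hdir x hx y hy
  exact ⟨z, hz, sup_le (hax.trans hxz) (hby.trans hyz)⟩

theorem directedOn_setOf_isCompactElement_and_le {α : Type*} [SemilatticeSup α] (a : α) :
    DirectedOn (· ≤ ·) {b : α | IsCompactElement b ∧ b ≤ a} :=
  have hIic : SupClosed (Set.Iic a) := fun _ hb _ hc ↦ sup_le hb hc
  (supClosed_setOf_isCompactElement.inter hIic).directedOn

theorem isCompactElement_bot {α : Type*} [PartialOrder α] [OrderBot α] :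
    IsCompactElement (⊥ : α) :=
  fun _ _ ⟨x, hx⟩ _ _ _ ↦ ⟨x, hx, bot_le⟩

theorem isLUB_setOf_isCompactElement_and_le {α : Type*} [CompleteLattice α]
    [IsCompactlyGenerated α] (a : α) : IsLUB {b : α | IsCompactElement b ∧ b ≤ a} a := by
  simpa only [sSup_compact_le_eq] using _root_.isLUB_sSup {b : α | IsCompactElement b ∧ b ≤ a}

section Adjunction

variable {α β : Type*} {l : α → β} {u : β → α}

theorem isCompactElement_map_of_galoisConnection [PartialOrder α] [PartialOrder β]
    (gc : GaloisConnection l u) (hu : ScottContinuous u) {a : α} (ha : IsCompactElement a) :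
    IsCompactElement (l a) := by
  intro s b hs hdir hb hab
  obtain ⟨_, ⟨x, hx, rfl⟩, hax⟩ :=
    ha (u '' s) (u b) (hs.image u) (hdir.mono_comp gc.monotone_u) (hu hs hdir hb) (gc.le_u hab)
  exact ⟨x, hx, gc.l_le hax⟩

variable [CompleteLattice α] [IsCompactlyGenerated α]

theorem isLUB_image_setOf_isCompactElement_and_le [PartialOrder β] (gi : GaloisInsertion l u)
    (x : β) : IsLUB (l '' {b : α | IsCompactElement b ∧ b ≤ u x}) x := by
  simpa only [gi.l_u_eq] using gi.gc.isLUB_l_image (isLUB_setOf_isCompactElement_and_le (u x))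

theorem exists_eq_map_of_isCompactElement [PartialOrder β] (gi : GaloisInsertion l u) {c : β}
    (hc : IsCompactElement c) : ∃ a, IsCompactElement a ∧ c = l a := by
  have hne : {b : α | IsCompactElement b ∧ b ≤ u c}.Nonempty := ⟨⊥, isCompactElement_bot, bot_le⟩
  have hdir : DirectedOn (· ≤ ·) (l '' {b : α | IsCompactElement b ∧ b ≤ u c}) :=
    (directedOn_setOf_isCompactElement_and_le (u c)).mono_comp gi.gc.monotone_l
  obtain ⟨_, ⟨a, ⟨ha, hac⟩, rfl⟩, hca⟩ :=
    hc _ c (hne.image l) hdir (isLUB_image_setOf_isCompactElement_and_le gi c) le_rfl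
  exact ⟨a, ha, hca.antisymm (gi.gc.l_le hac)⟩

theorem isCompactElement_iff_exists_eq_map [PartialOrder β]
    (gi : GaloisInsertion l u) (hu : ScottContinuous u) {c : β} :
    IsCompactElement c ↔ ∃ a, IsCompactElement a ∧ c = l a := by
  refine ⟨fun hc ↦ exists_eq_map_of_isCompactElement gi hc, ?_⟩
  rintro ⟨a, ha, rfl⟩
  exact isCompactElement_map_of_galoisConnection gi.gc hu ha

theorem isCompactlyGenerated_of_galoisInsertion [CompleteLattice β] (gi : GaloisInsertion l u)
    (hu : ScottContinuous u) : IsCompactlyGenerated β where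
  exists_sSup_eq x :=
    ⟨l '' {b | IsCompactElement b ∧ b ≤ u x},
      Set.forall_mem_image.2 fun _ hb ↦ isCompactElement_map_of_galoisConnection gi.gc hu hb.1,
      (isLUB_image_setOf_isCompactElement_and_le gi x).sSup_eq⟩

end Adjunction

namespace IsIdealLattice

variable {α β : Type*} [CompleteLattice α] [Mul α] [CompleteLattice β] [Mul β]

theorem isCompactlyGenerated (h : IsIdealLattice α) : IsCompactlyGenerated α where
  exists_sSup_eq a := ⟨_, fun _ hb ↦ hb.2, (h.compactlyGenerated a).symm⟩

theorem of_galoisInsertion {l : α → β} {u : β → α} (hα : IsIdealLattice α)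
    (gi : GaloisInsertion l u) (hu : ScottContinuous u) (hmul : ∀ a b, l (a * b) = l a * l b) :
    IsIdealLattice β where
  mul_assoc := gi.l_surjective.forall₃.2 fun a b c ↦ by simp only [← hmul, hα.mul_assoc]
  compactlyGenerated x := by
    have := hα.isCompactlyGenerated
    have := isCompactlyGenerated_of_galoisInsertion gi hu
    simpa only [and_comm] using (sSup_compact_le_eq x).symm
  mul_sup := gi.l_surjective.forall₃.2 fun a b c ↦ by
    simp only [← hmul, ← gi.gc.l_sup, hα.mul_sup]
  sup_mul := gi.l_surjective.forall₃.2 fun a b c ↦ by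
    simp only [← hmul, ← gi.gc.l_sup, hα.sup_mul]
  top_compact := gi.l_top ▸ isCompactElement_map_of_galoisConnection gi.gc hu hα.top_compact
  top_mul := gi.l_surjective.forall.2 fun a ↦ by rw [← gi.l_top, ← hmul, hα.top_mul]
  mul_top := gi.l_surjective.forall.2 fun a ↦ by rw [← gi.l_top, ← hmul, hα.mul_top]
  compact_mul x y hx hy := by
    have := hα.isCompactlyGenerated
    obtain ⟨a, ha, rfl⟩ := exists_eq_map_of_isCompactElement gi hx
    obtain ⟨b, hb, rfl⟩ := exists_eq_map_of_isCompactElement gi hy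
    rw [← hmul]
    exact isCompactElement_map_of_galoisConnection gi.gc hu (hα.compact_mul a b ha hb)

end IsIdealLattice

theorem scottContinuous_subtype_val_of_dirSupClosed {α : Type*} [CompletePartialOrder α]
    {s : Set α} (hs : DirSupClosed s) : ScottContinuous ((↑) : {x // x ∈ s} → α) := by
  intro d hne hdir a ha
  have hdir' : DirectedOn (· ≤ ·) (Subtype.val '' d) := hdir.mono_comp fun _ _ h ↦ h
  have hlub : IsLUB (Subtype.val '' d) (sSup (Subtype.val '' d)) := hdir'.isLUB_sSup
  have hmem : sSup (Subtype.val '' d) ∈ s :=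
    hs (Subtype.coe_image_subset s d) (hne.image _) hdir' hlub
  have hlub_sub : IsLUB d ⟨sSup (Subtype.val '' d), hmem⟩ :=
    IsLUB.of_image (f := Subtype.val) Iff.rfl hlub
  rwa [ha.unique hlub_sub]

section LeastAbove

variable {α : Type*} [CompleteLattice α] {s : Set α}

/-- The map `π : L → L'`: for a set `s` closed under infima, `leastAbove hs a` is the least element
of `s` above `a`. -/
def leastAbove (hs : ∀ A ⊆ s, sInf A ∈ s) (a : α) : {x // x ∈ s} :=
  ⟨sInf {x | x ∈ s ∧ a ≤ x}, hs _ fun _ hx ↦ hx.1⟩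

theorem gc_leastAbove_val (hs : ∀ A ⊆ s, sInf A ∈ s) :
    GaloisConnection (leastAbove hs) Subtype.val := fun _ x ↦
  ⟨fun h ↦ (le_sInf fun _ hy ↦ hy.2).trans h, fun h ↦ sInf_le ⟨x.2, h⟩⟩

/-- The adjunction between `leastAbove` and the inclusion, through which a set closed under infima
receives its complete lattice structure. -/
def leastAboveGaloisInsertion (hs : ∀ A ⊆ s, sInf A ∈ s) :
    GaloisInsertion (leastAbove hs) Subtype.val :=
  (gc_leastAbove_val hs).toGaloisInsertion fun x ↦ (gc_leastAbove_val hs).le_u_l x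

theorem coe_leastAbove_sSup_image (hs : ∀ A ⊆ s, sInf A ∈ s) (A : Set {x // x ∈ s}) :
    (leastAbove hs (sSup (Subtype.val '' A)) : α) =
      sInf {x | x ∈ s ∧ ∀ a ∈ A, (a : α) ≤ x} := by
  simp only [leastAbove, sSup_le_iff, Set.forall_mem_image]

end LeastAbove

/-- Let `L` be an ideal lattice and `L' ⊆ L` closed under arbitrary infima and directed
suprema; let `π(a) = inf {a' ∈ L' : a ≤ a'}` and assume
`π(a·π(b)) = π(ab) = π(π(a)·b)`. Then `L'`, with the induced order and multiplication
`a · b = π(ab)`, is an ideal lattice; its suprema are `sup A = inf {a' ∈ L' : ∀ a ∈ A, a ≤ a'}`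
and its compact elements are exactly the `π(a)` with `a` compact in `L`. -/
theorem sublattice_isIdealLattice {α : Type*} [CompleteLattice α] [Mul α]
    (hL : IsIdealLattice α) (L' : Set α)
    (hInf : ∀ A : Set α, A ⊆ L' → sInf A ∈ L')
    (hSup : ∀ A : Set α, A ⊆ L' → A.Nonempty → DirectedOn (· ≤ ·) A → sSup A ∈ L')
    (hπ : ∀ a b : α,
      sInf {x | x ∈ L' ∧ a * sInf {y | y ∈ L' ∧ b ≤ y} ≤ x} =
        sInf {x | x ∈ L' ∧ a * b ≤ x} ∧
      sInf {x | x ∈ L' ∧ a * b ≤ x} =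
        sInf {x | x ∈ L' ∧ sInf {y | y ∈ L' ∧ a ≤ y} * b ≤ x}) :
    ∃ (cl : CompleteLattice {x // x ∈ L'}) (m : Mul {x // x ∈ L'}),
      letI := cl
      letI := m
      (∀ x y : {x // x ∈ L'}, x ≤ y ↔ (x : α) ≤ (y : α)) ∧
      (∀ x y : {x // x ∈ L'},
        ((x * y : {x // x ∈ L'}) : α) = sInf {z | z ∈ L' ∧ (x : α) * (y : α) ≤ z}) ∧
      (∀ A : Set {x // x ∈ L'},
        ((sSup A : {x // x ∈ L'}) : α) =
          sInf {a' | a' ∈ L' ∧ ∀ a ∈ A, (a : α) ≤ a'}) ∧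
      IsIdealLattice {x // x ∈ L'} ∧
      (∀ c : {x // x ∈ L'}, IsCompactElement c ↔
        ∃ a : α, IsCompactElement a ∧ (c : α) = sInf {z | z ∈ L' ∧ a ≤ z}) := by
  let π : α → {x // x ∈ L'} := leastAbove hInf
  let gi : GaloisInsertion π Subtype.val := leastAboveGaloisInsertion hInf
  let cl : CompleteLattice {x // x ∈ L'} := gi.liftCompleteLattice
  let m : Mul {x // x ∈ L'} := ⟨fun x y ↦ π (x * y)⟩
  have hclosed : DirSupClosed L' := fun d hd hne hdir _ ha ↦ ha.sSup_eq ▸ hSup d hd hne hdir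
  have hval : ScottContinuous (Subtype.val : {x // x ∈ L'} → α) :=
    scottContinuous_subtype_val_of_dirSupClosed hclosed
  have hmul (a b : α) : π (a * b) = π a * π b :=
    Subtype.ext ((hπ a b).2.trans (hπ (π a) b).1.symm)
  have := hL.isCompactlyGenerated
  refine ⟨cl, m, fun _ _ ↦ Iff.rfl, fun _ _ ↦ rfl, coe_leastAbove_sSup_image hInf,
    hL.of_galoisInsertion gi hval hmul, fun c ↦ ?_⟩
  simp only [isCompactElement_iff_exists_eq_map gi hval, Subtype.ext_iff, π, leastAbove]
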